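/- arXiv:1509.07349 — 2 statements merged into one kernel-verified Lean document; each statement's English description precedes it below -/
import Mathlib

section
/- In the atomic charging game with utility u_i(s) = -g_i(Σ_{t=s_i}^{s_i+C_i-1} f(L_t(s))) where each g_i : ℝ → ℝ is strictly increasing, the function Φ(s) = -Σ_{t∈T} Σ_{v=0}^{n_t(s)} f(L_t^exo + P·v) is an ordinal potential: for every player i, every s_{-i}, and every pair of actions s_i, s_i', one has u_i(s_i, s_{-i}) - u_i(s_i', s_{-i}) > 0 if and only if Φ(s_i, s_{-i}) - Φ(s_i', s_{-i}) > 0. -/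
/-- Number of EVs charging at time `t` under profile `s`. -/
def nActive (I : ℕ) (C : Fin I → ℕ) (s : Fin I → ℤ) (t : ℤ) : ℕ :=
  (Finset.univ.filter (fun i : Fin I => s i ≤ t ∧ t ≤ s i + (C i : ℤ) - 1)).card

/-- Total load at time `t`. -/
noncomputable def load (I : ℕ) (C : Fin I → ℕ) (Lexo : ℤ → ℝ) (P : ℝ)
    (s : Fin I → ℤ) (t : ℤ) : ℝ :=
  Lexo t + P * (nActive I C s t : ℝ)

/-- Utility of player `i`: `u_i(s) = -g_i(Σ_{t=s_i}^{s_i+C_i-1} f(L_t(s)))`. -/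
noncomputable def util (I : ℕ) (C : Fin I → ℕ) (Lexo : ℤ → ℝ) (P : ℝ)
    (f : ℝ → ℝ) (g : Fin I → ℝ → ℝ) (i : Fin I) (s : Fin I → ℤ) : ℝ :=
  -g i (∑ t ∈ Finset.Icc (s i) (s i + (C i : ℤ) - 1), f (load I C Lexo P s t))

/-- Rosenthal-type potential. -/
noncomputable def Phi (T I : ℕ) (C : Fin I → ℕ) (Lexo : ℤ → ℝ) (P : ℝ)
    (f : ℝ → ℝ) (s : Fin I → ℤ) : ℝ :=
  -∑ t ∈ Finset.Icc (1 : ℤ) (T : ℤ),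
      ∑ v ∈ Finset.range (nActive I C s t + 1), f (Lexo t + P * (v : ℝ))

/-- Number of EVs other than `i` charging at time `t`. -/
def nOther (I : ℕ) (C : Fin I → ℕ) (i : Fin I) (s : Fin I → ℤ) (t : ℤ) : ℕ :=
  ((Finset.univ.erase i).filter (fun j : Fin I => s j ≤ t ∧ t ≤ s j + (C j : ℤ) - 1)).card

theorem nActive_eq (I : ℕ) (C : Fin I → ℕ) (i : Fin I) (s : Fin I → ℤ) (t : ℤ) :
    nActive I C s t = nOther I C i s t +
      (if t ∈ Finset.Icc (s i) (s i + (C i : ℤ) - 1) then 1 else 0) := by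
  unfold nActive nOther
  rw [Finset.card_filter, Finset.card_filter,
    ← Finset.sum_erase_add _ _ (Finset.mem_univ i)]
  simp only [Finset.mem_Icc]

theorem nOther_update (I : ℕ) (C : Fin I → ℕ) (i : Fin I) (s : Fin I → ℤ) (s' : ℤ) (t : ℤ) :
    nOther I C i (Function.update s i s') t = nOther I C i s t := by
  unfold nOther
  congr 1
  apply Finset.filter_congr
  intro j hj
  rw [Function.update_of_ne (Finset.ne_of_mem_erase hj)]

theorem Phi_eq (T I : ℕ) (C : Fin I → ℕ) (Lexo : ℤ → ℝ) (P : ℝ)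
    (f : ℝ → ℝ) (i : Fin I) (s : Fin I → ℤ)
    (h : 1 ≤ s i ∧ s i + (C i : ℤ) - 1 ≤ (T : ℤ)) :
    Phi T I C Lexo P f s = -((∑ t ∈ Finset.Icc (1 : ℤ) (T : ℤ),
      ∑ v ∈ Finset.range (nOther I C i s t + 1), f (Lexo t + P * (v : ℝ))) +
      ∑ t ∈ Finset.Icc (s i) (s i + (C i : ℤ) - 1), f (load I C Lexo P s t)) := by
  have hsub : Finset.Icc (s i) (s i + (C i : ℤ) - 1) ⊆ Finset.Icc (1 : ℤ) (T : ℤ) :=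
    Finset.Icc_subset_Icc h.1 h.2
  unfold Phi
  rw [← Finset.inter_eq_right.mpr hsub, ← Finset.sum_ite_mem, ← Finset.sum_add_distrib]
  congr 1
  apply Finset.sum_congr rfl
  intro t _
  unfold load
  rw [nActive_eq I C i s t]
  split_ifs with ht
  · rw [Finset.sum_range_succ _ (nOther I C i s t + 1)]
  · simp

/-- `Φ` is an ordinal potential for the atomic charging game: unilateral
deviation improvements of any player's utility have the same sign as the corresponding
change of `Φ`. -/
theorem ordinal_potential_property
    (T I : ℕ) (C : Fin I → ℕ) (hC : ∀ i, 1 ≤ C i)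
    (Lexo : ℤ → ℝ) (P : ℝ) (hP : 0 < P) (f : ℝ → ℝ)
    (g : Fin I → ℝ → ℝ) (hg : ∀ i, StrictMono (g i))
    (i : Fin I) (s : Fin I → ℤ) (s' : ℤ)
    (hwin : ∀ j, 1 ≤ s j ∧ s j + (C j : ℤ) - 1 ≤ (T : ℤ))
    (hwin' : 1 ≤ s' ∧ s' + (C i : ℤ) - 1 ≤ (T : ℤ)) :
    (0 < util I C Lexo P f g i s - util I C Lexo P f g i (Function.update s i s')
      ↔ 0 < Phi T I C Lexo P f s - Phi T I C Lexo P f (Function.update s i s')) := by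
  rw [Phi_eq T I C Lexo P f i s (hwin i),
    Phi_eq T I C Lexo P f i (Function.update s i s') (by simpa using hwin')]
  simp only [nOther_update]
  unfold util
  have key := (hg i).lt_iff_lt
    (a := ∑ t ∈ Finset.Icc (s i) (s i + (C i : ℤ) - 1), f (load I C Lexo P s t))
    (b := ∑ t ∈ Finset.Icc (Function.update s i s' i) (Function.update s i s' i + (C i : ℤ) - 1),
      f (load I C Lexo P (Function.update s i s') t))
  constructor
  · intro h
    have := key.mp (by linarith)
    linarith
  · intro h
    have := key.mpr (by linarith)
    linarith
end

section
/- Efficiency equals one in the symmetric nonatomic charging game: if f is C¹, strictly increasing, and strictly convex, L^exo is convex increasing, and 1 > q·L_{T-1}^exo - Σ_{k=1}^{q} L_{T-1-kC}^exo (with T-C+1 = qC + r, r < C), then the unique Wardrop equilibrium configuration x^NE of the game with cost f minimizes the total grid cost Σ_{t∈T} f(L_t^exo + P·x_t) over all feasible configurations; in particular the ratio (equilibrium total cost)/(minimum total cost) equals 1. -/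
namespace Stmt15

/-- Induced charging configuration of a symmetric start-time distribution. -/
noncomputable def config (T C : ℕ) (xt : ℕ → ℝ) : ℕ → ℝ := fun t =>
  ∑ u ∈ Finset.Icc (max 1 (t + 1 - C)) (min t (T - C + 1)), xt u

/-- The simplex of start-time distributions. -/
def InSimplex (T C : ℕ) (xt : ℕ → ℝ) : Prop :=
  (∀ t, 0 ≤ xt t) ∧ (∀ t, (t < 1 ∨ T - C + 1 < t) → xt t = 0) ∧
  (∑ t ∈ Finset.Icc 1 (T - C + 1), xt t = 1)

/-- Cost of start time `s` with per-slot cost `g`. -/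
noncomputable def cost (T C : ℕ) (Lexo : ℕ → ℝ) (P : ℝ) (g : ℝ → ℝ)
    (xt : ℕ → ℝ) (s : ℕ) : ℝ :=
  ∑ t ∈ Finset.Icc s (s + C - 1), g (Lexo t + P * config T C xt t)

/-- Wardrop equilibrium with per-slot cost `g`. -/
def IsWardrop (T C : ℕ) (Lexo : ℕ → ℝ) (P : ℝ) (g : ℝ → ℝ) (xt : ℕ → ℝ) : Prop :=
  ∀ s ∈ Finset.Icc 1 (T - C + 1), 0 < xt s →
    ∀ s' ∈ Finset.Icc 1 (T - C + 1),
      cost T C Lexo P g xt s ≤ cost T C Lexo P g xt s'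

/-- Total grid cost `Σ_t f(L_t^exo + P·x_t)`. -/
noncomputable def totalCost (T C : ℕ) (Lexo : ℕ → ℝ) (P : ℝ) (f : ℝ → ℝ)
    (xt : ℕ → ℝ) : ℝ :=
  ∑ t ∈ Finset.Icc 1 T, f (Lexo t + P * config T C xt t)

lemma exch (T C : ℕ) (hC : 1 ≤ C) (hCT : C ≤ T) (g xt : ℕ → ℝ) :
    ∑ t ∈ Finset.Icc 1 T, g t * config T C xt t =
      ∑ s ∈ Finset.Icc 1 (T - C + 1), xt s * ∑ t ∈ Finset.Icc s (s + C - 1), g t := by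
  unfold config
  simp only [Finset.mul_sum]
  rw [Finset.sum_comm' (t' := Finset.Icc 1 (T - C + 1))
    (s' := fun s => Finset.Icc s (s + C - 1))]
  · refine Finset.sum_congr rfl fun s _ => Finset.sum_congr rfl fun t _ => mul_comm _ _
  · intro t u
    simp only [Finset.mem_Icc, max_le_iff, le_min_iff]
    omega

lemma wardrop_vi (T C : ℕ) (hC : 1 ≤ C) (hCT : C ≤ T) (Lexo : ℕ → ℝ) (P : ℝ) (g : ℝ → ℝ)
    (x y : ℕ → ℝ) (hx : InSimplex T C x) (hy : InSimplex T C y)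
    (hw : IsWardrop T C Lexo P g x) :
    0 ≤ ∑ t ∈ Finset.Icc 1 T,
      g (Lexo t + P * config T C x t) * (config T C y t - config T C x t) := by
  simp only [mul_sub, Finset.sum_sub_distrib]
  rw [exch T C hC hCT (fun t => g (Lexo t + P * config T C x t)) y,
    exch T C hC hCT (fun t => g (Lexo t + P * config T C x t)) x]
  obtain ⟨s0, hs0, hpos⟩ : ∃ s ∈ Finset.Icc 1 (T - C + 1), 0 < x s := by
    apply Finset.exists_lt_of_sum_lt (f := fun _ => (0:ℝ))
    rw [hx.2.2]; simp
  have h1 : ∑ s ∈ Finset.Icc 1 (T - C + 1), x s * cost T C Lexo P g x s ≤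
      cost T C Lexo P g x s0 := by
    calc _ ≤ ∑ s ∈ Finset.Icc 1 (T - C + 1), x s * cost T C Lexo P g x s0 := by
          refine Finset.sum_le_sum fun s hs => ?_
          rcases (hx.1 s).eq_or_lt with h | h
          · simp [← h]
          · exact mul_le_mul_of_nonneg_left (hw s hs h s0 hs0) h.le
      _ = _ := by rw [← Finset.sum_mul, hx.2.2, one_mul]
  have h2 : cost T C Lexo P g x s0 ≤
      ∑ s ∈ Finset.Icc 1 (T - C + 1), y s * cost T C Lexo P g x s := by
    calc _ = ∑ s ∈ Finset.Icc 1 (T - C + 1), y s * cost T C Lexo P g x s0 := by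
          rw [← Finset.sum_mul, hy.2.2, one_mul]
      _ ≤ _ := Finset.sum_le_sum fun s hs =>
          mul_le_mul_of_nonneg_left (hw s0 hs0 hpos s hs) (hy.1 s)
  unfold cost at h1 h2
  linarith

lemma wardrop_unique (T C : ℕ) (hC : 1 ≤ C) (hCT : C ≤ T) (Lexo : ℕ → ℝ) (P : ℝ) (hP : 0 < P)
    (g : ℝ → ℝ) (hg : StrictMono g)
    (x y : ℕ → ℝ) (hx : InSimplex T C x) (hy : InSimplex T C y)
    (hwx : IsWardrop T C Lexo P g x) (hwy : IsWardrop T C Lexo P g y) :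
    ∀ t ∈ Finset.Icc 1 T, config T C x t = config T C y t := by
  have h1 := wardrop_vi T C hC hCT Lexo P g x y hx hy hwx
  have h2 := wardrop_vi T C hC hCT Lexo P g y x hy hx hwy
  have h3 : ∀ a b c : ℝ, a ≠ b → 0 < (g (c + P * a) - g (c + P * b)) * (a - b) := by
    intro a b c hab
    rcases hab.lt_or_gt with h | h
    · have := hg (show c + P * a < c + P * b by nlinarith)
      nlinarith
    · have := hg (show c + P * b < c + P * a by nlinarith)
      nlinarith
  have h4 : ∀ t ∈ Finset.Icc 1 T, 0 ≤ (g (Lexo t + P * config T C x t) -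
      g (Lexo t + P * config T C y t)) * (config T C x t - config T C y t) := by
    intro t _
    by_cases h : config T C x t = config T C y t
    · simp [h]
    · exact (h3 _ _ _ h).le
  have h5 : ∑ t ∈ Finset.Icc 1 T, (g (Lexo t + P * config T C x t) -
      g (Lexo t + P * config T C y t)) * (config T C x t - config T C y t) = 0 := by
    refine le_antisymm ?_ (Finset.sum_nonneg h4)
    have h6 := add_nonneg h1 h2
    rw [← Finset.sum_add_distrib] at h6
    rw [← neg_nonneg, ← Finset.sum_neg_distrib]
    refine h6.trans_eq (Finset.sum_congr rfl fun t _ => by ring)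
  intro t ht
  by_contra h
  have := (Finset.sum_eq_zero_iff_of_nonneg h4).1 h5 t ht
  exact absurd this (h3 _ _ _ h).ne'

/-- The obstacle operator. -/
noncomputable def obst (N C : ℕ) (d : ℕ → ℝ) (F : ℕ → ℝ) (s : ℕ) : ℝ :=
  if s = 0 then 0 else if N ≤ s then 1 else min 1 ((F (s + C) + F (s - C) + d s) / 2)

lemma obst_mono (N C : ℕ) (d F G : ℕ → ℝ) (h : ∀ s, F s ≤ G s) (s : ℕ) :
    obst N C d F s ≤ obst N C d G s := by
  unfold obst
  split_ifs
  · exact le_rfl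
  · exact le_rfl
  · have := h (s + C)
    have := h (s - C)
    exact min_le_min le_rfl (by linarith)

lemma obst_exists (N C : ℕ) (d : ℕ → ℝ) (hd : ∀ s, 0 ≤ d s) :
    ∃ F : ℕ → ℝ, (∀ s, 0 ≤ F s) ∧ (∀ s, F s ≤ 1) ∧ (∀ s, obst N C d F s = F s) ∧
      ∀ G : ℕ → ℝ, (∀ s, 0 ≤ G s) → (∀ s, G s ≤ 1) → (∀ s, obst N C d G s ≤ G s) →
        ∀ s, F s ≤ G s := by
  let S : Set (ℕ → ℝ) := {G | (∀ s, 0 ≤ G s) ∧ (∀ s, G s ≤ 1) ∧ ∀ s, obst N C d G s ≤ G s}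
  have hob1 : ∀ G s, obst N C d G s ≤ 1 := by
    intro G s
    unfold obst
    split_ifs
    · exact zero_le_one
    · exact le_rfl
    · exact min_le_left _ _
  have hob0 : ∀ G : ℕ → ℝ, (∀ s, 0 ≤ G s) → ∀ s, 0 ≤ obst N C d G s := by
    intro G hG s
    unfold obst
    split_ifs
    · exact le_rfl
    · exact zero_le_one
    · have := hG (s + C)
      have := hG (s - C)
      have := hd s
      exact le_min zero_le_one (by linarith)
  have hone : (fun _ => (1:ℝ)) ∈ S :=
    ⟨fun _ => zero_le_one, fun _ => le_rfl, fun s => hob1 _ s⟩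
  have : Nonempty S := ⟨⟨_, hone⟩⟩
  let F : ℕ → ℝ := fun s => ⨅ G : S, G.1 s
  have hlow : ∀ G ∈ S, ∀ s, F s ≤ G s := fun G hG s =>
    ciInf_le (f := fun G : S => G.1 s) ⟨0, by rintro _ ⟨G, rfl⟩; exact G.2.1 s⟩ ⟨G, hG⟩
  have hF0 : ∀ s, 0 ≤ F s := fun s => le_ciInf fun G => G.2.1 s
  have hF1 : ∀ s, F s ≤ 1 := fun s => hlow _ hone s
  have hsup : ∀ s, obst N C d F s ≤ F s := fun s => le_ciInf fun G =>
    (obst_mono N C d F G.1 (hlow G.1 G.2) s).trans (G.2.2.2 s)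
  refine ⟨F, hF0, hF1, fun s => le_antisymm (hsup s) ?_, fun G h0 h1 h2 => hlow G ⟨h0, h1, h2⟩⟩
  exact hlow (obst N C d F) ⟨hob0 F hF0, hob1 F, obst_mono N C d _ _ hsup⟩ s

lemma tele (F : ℕ → ℝ) (a b : ℕ) (h : a ≤ b) :
    ∑ u ∈ Finset.Icc (a + 1) b, (F u - F (u - 1)) = F b - F a := by
  induction b, h using Nat.le_induction with
  | base => simp
  | succ n hn ih =>
    rw [Finset.sum_Icc_succ_top (by omega), ih]
    simp

lemma good_exists (T C : ℕ) (hC : 1 ≤ C) (hCT : C ≤ T) (Lexo : ℕ → ℝ) (P : ℝ) (hP : 0 < P)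
    (hLinc : ∀ t, Lexo t ≤ Lexo (t + 1))
    (hLconv : ∀ t, Lexo (t + 1) - Lexo t ≤ Lexo (t + 2) - Lexo (t + 1)) :
    ∃ x, InSimplex T C x ∧ ∀ g : ℝ → ℝ, Monotone g → IsWardrop T C Lexo P g x := by
  have hLm : Monotone Lexo := monotone_nat_of_le_succ hLinc
  have hLd : Monotone (fun t => Lexo (t + 1) - Lexo t) := monotone_nat_of_le_succ hLconv
  obtain ⟨N, hN⟩ : ∃ N, N = T - C + 1 := ⟨_, rfl⟩
  let d : ℕ → ℝ := fun s => (Lexo (s + C) - Lexo s) / P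
  have hd : ∀ s, 0 ≤ d s := fun s =>
    div_nonneg (sub_nonneg.2 (hLm (Nat.le_add_right _ _))) hP.le
  have hdm : ∀ s, d s ≤ d (s + 1) := by
    intro s
    have h := hLd (Nat.le_add_right s C)
    simp only at h
    apply div_le_div_of_nonneg_right _ hP.le
    rw [show s + 1 + C = s + C + 1 by ring]
    linarith
  obtain ⟨F, hF0, hF1, hfix, hleast⟩ := obst_exists N C d hd
  have hFz : F 0 = 0 := by rw [← hfix]; simp [obst]
  have hFN : ∀ s, N ≤ s → F s = 1 := by
    intro s hs
    rw [← hfix, obst, if_neg (by omega), if_pos hs]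
  have hFmid : ∀ s, 1 ≤ s → s < N → F s = min 1 ((F (s + C) + F (s - C) + d s) / 2) := by
    intro s h1 h2
    conv_lhs => rw [← hfix, obst, if_neg (by omega), if_neg (by omega)]
  have hmono : ∀ s, F s ≤ F (s + 1) := by
    intro s
    have key := hleast (fun s => if s = 0 then 0 else F (s + 1))
      (fun s => by split_ifs; exacts [le_rfl, hF0 _])
      (fun s => by split_ifs; exacts [zero_le_one, hF1 _])
      (fun s => by
        rcases Nat.eq_zero_or_pos s with h | h
        · simp [h, obst]
        rw [if_neg (by omega)]
        rcases Nat.lt_or_ge (s + 1) N with h' | h'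
        · rw [hFmid (s + 1) (by omega) h', obst, if_neg (by omega), if_neg (by omega),
            if_neg (by omega)]
          refine min_le_min le_rfl ?_
          have e1 : F (s + C + 1) = F (s + 1 + C) := by congr 1; omega
          have e2 : (if s - C = 0 then 0 else F (s - C + 1)) ≤ F (s + 1 - C) := by
            split_ifs with h0
            · exact hF0 _
            · rw [show s - C + 1 = s + 1 - C by omega]
          have := hdm s
          linarith
        · rw [hFN _ h', obst]
          split_ifs <;> first | exact zero_le_one | exact le_rfl | exact min_le_left _ _)
      s
    split_ifs at key with h
    · subst h; rw [hFz]; exact hF0 _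
    · exact key
  have hFm : Monotone F := monotone_nat_of_le_succ hmono
  have hcfg : ∀ t, 1 ≤ t → t ≤ T →
      config T C (fun s => F s - F (s - 1)) t = F t - F (t - C) := by
    intro t h1 h2
    unfold config
    rw [show max 1 (t + 1 - C) = (t - C) + 1 by omega, tele _ _ _ (by omega), ← hN]
    congr 1
    rcases le_total t N with h | h
    · rw [min_eq_left h]
    · rw [min_eq_right h, hFN _ le_rfl, hFN _ h]
  refine ⟨fun s => F s - F (s - 1), ⟨fun s => sub_nonneg.2 (hFm (Nat.sub_le _ _)), ?_, ?_⟩, ?_⟩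
  · intro t ht
    dsimp only
    rcases ht with h | h
    · have : t = 0 := by omega
      simp [this]
    · rw [hFN t (by omega), hFN (t - 1) (by omega), sub_self]
  · have := tele F 0 N (by omega)
    rw [← hN]
    simpa [hFz, hFN N le_rfl] using this
  · intro g hg
    set x : ℕ → ℝ := fun s => F s - F (s - 1) with hxdef
    have hload : ∀ s, 1 ≤ s → s < N →
        Lexo s + P * config T C x s ≤ Lexo (s + C) + P * config T C x (s + C) ∧
        (F s < 1 → Lexo s + P * config T C x s = Lexo (s + C) + P * config T C x (s + C)) := by
      intro s h1 h2
      rw [hcfg s h1 (by omega), hcfg (s + C) (by omega) (by omega), Nat.add_sub_cancel]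
      have hm := hFmid s h1 h2
      have hdP : P * d s = Lexo (s + C) - Lexo s := by
        simp only [d]; field_simp
      constructor
      · have : F s ≤ (F (s + C) + F (s - C) + d s) / 2 := hm.trans_le (min_le_right _ _)
        nlinarith
      · intro hlt
        have : F s = (F (s + C) + F (s - C) + d s) / 2 := by
          rcases min_choice 1 ((F (s + C) + F (s - C) + d s) / 2) with h | h
          · rw [h] at hm; linarith
          · rw [h] at hm; exact hm
        have h3 : P * (2 * F s) = P * (F (s + C) + F (s - C) + d s) := by rw [this]; ring
        linarith
    have hcost : ∀ s, cost T C Lexo P g x (s + 1) + g (Lexo s + P * config T C x s) =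
        cost T C Lexo P g x s + g (Lexo (s + C) + P * config T C x (s + C)) := by
      intro s
      unfold cost
      obtain ⟨c, rfl⟩ : ∃ c, C = c + 1 := ⟨C - 1, by omega⟩
      have e1 : s + 1 + (c + 1) - 1 = s + (c + 1) := by omega
      have e2 : s + (c + 1) - 1 = s + c := by omega
      rw [e1, e2, ← add_assoc s c 1]
      have h1 := Finset.sum_Icc_succ_top (a := s) (b := s + c) (by omega)
        (fun t => g (Lexo t + P * config T (c + 1) x t))
      have h2 := Finset.add_sum_Ioc_eq_sum_Icc
        (f := fun t => g (Lexo t + P * config T (c + 1) x t)) (show s ≤ s + c + 1 by omega)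
      have h3 : Finset.Ioc s (s + c + 1) = Finset.Icc (s + 1) (s + c + 1) := by
        ext t
        simp only [Finset.mem_Ioc, Finset.mem_Icc]
        omega
      rw [h3] at h2
      linarith
    have hup : ∀ s, 1 ≤ s → s ≤ N → cost T C Lexo P g x 1 ≤ cost T C Lexo P g x s := by
      intro s h1
      induction s, h1 using Nat.le_induction with
      | base => intro _; exact le_rfl
      | succ n hn ih =>
        intro h
        have := hg (hload n hn (by omega)).1
        have := hcost n
        have := ih (by omega)
        linarith
    have heq : ∀ s, 1 ≤ s → s ≤ N → F (s - 1) < 1 →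
        cost T C Lexo P g x s = cost T C Lexo P g x 1 := by
      intro s h1
      induction s, h1 using Nat.le_induction with
      | base => intro _ _; rfl
      | succ n hn ih =>
        intro h hF
        rw [Nat.add_sub_cancel] at hF
        have h3 := congrArg g ((hload n hn (by omega)).2 hF)
        have := hcost n
        have := ih (by omega) ((hFm (Nat.sub_le n 1)).trans_lt hF)
        linarith
    intro s hs hpos s' hs'
    rw [Finset.mem_Icc, ← hN] at hs hs'
    rw [heq s hs.1 hs.2 (by have := hF1 s; simp only [hxdef] at hpos; linarith)]
    exact hup s' hs'.1 hs'.2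

/-- efficiency equals one in the symmetric nonatomic charging game: under
the stated assumptions on `f` and `L^exo`, any Wardrop equilibrium `x̃^NE` of the game
with cost `f` minimizes the total grid cost over feasible configurations; in particular
its total cost equals that of any social optimum. -/
theorem efficiency_equals_one
    (T C q r : ℕ) (hC : 1 ≤ C) (hCT : C ≤ T)
    (hdiv : T - C + 1 = q * C + r) (hr : r < C)
    (Lexo : ℕ → ℝ) (P : ℝ) (hP : 0 < P)
    (hLinc : ∀ t, Lexo t ≤ Lexo (t + 1))
    (hLconv : ∀ t, Lexo (t + 1) - Lexo t ≤ Lexo (t + 2) - Lexo (t + 1))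
    (hcond : (1 : ℝ) > q * Lexo (T - 1) - ∑ k ∈ Finset.Icc 1 q, Lexo (T - 1 - k * C))
    (f : ℝ → ℝ) (hC1 : ContDiff ℝ 1 f) (hmono : StrictMono f)
    (hconv : StrictConvexOn ℝ Set.univ f)
    (xtNE : ℕ → ℝ) (hNEfeas : InSimplex T C xtNE)
    (hNE : IsWardrop T C Lexo P f xtNE) :
    (∀ yt, InSimplex T C yt →
      totalCost T C Lexo P f xtNE ≤ totalCost T C Lexo P f yt) ∧
    (∀ yt, InSimplex T C yt →
      (∀ zt, InSimplex T C zt → totalCost T C Lexo P f yt ≤ totalCost T C Lexo P f zt) →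
      totalCost T C Lexo P f xtNE = totalCost T C Lexo P f yt) := by
  have hmin : ∀ yt, InSimplex T C yt →
      totalCost T C Lexo P f xtNE ≤ totalCost T C Lexo P f yt := by
    intro yt hy
    obtain ⟨x, hx, hw⟩ := good_exists T C hC hCT Lexo P hP hLinc hLconv
    have huniq := wardrop_unique T C hC hCT Lexo P hP f hmono xtNE x hNEfeas hx hNE
      (hw f hmono.monotone)
    have hdiff : Differentiable ℝ f := hC1.differentiable (by norm_num)
    have hdm : Monotone (deriv f) := by
      rw [← monotoneOn_univ]
      exact hconv.convexOn.monotoneOn_deriv (fun z _ => hdiff z)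
    have hvi := wardrop_vi T C hC hCT Lexo P (deriv f) x yt hx hy (hw _ hdm)
    have htan : ∀ a b, f a + deriv f a * (b - a) ≤ f b := by
      intro a b
      rcases lt_trichotomy a b with h | h | h
      · have := hconv.convexOn.deriv_le_slope (Set.mem_univ a) (Set.mem_univ b) h (hdiff a)
        rw [slope_def_field, le_div_iff₀ (by linarith)] at this
        linarith
      · subst h; simp
      · have := hconv.convexOn.slope_le_deriv (Set.mem_univ b) (Set.mem_univ a) h (hdiff a)
        rw [slope_def_field, div_le_iff₀ (by linarith)] at this
        linarith
    have heq : totalCost T C Lexo P f xtNE = totalCost T C Lexo P f x := by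
      unfold totalCost
      exact Finset.sum_congr rfl fun t ht => by rw [huniq t ht]
    rw [heq]
    have hs := Finset.sum_le_sum (s := Finset.Icc 1 T) fun t _ =>
      htan (Lexo t + P * config T C x t) (Lexo t + P * config T C yt t)
    rw [Finset.sum_add_distrib] at hs
    have h2 : ∑ t ∈ Finset.Icc 1 T, deriv f (Lexo t + P * config T C x t) *
        (Lexo t + P * config T C yt t - (Lexo t + P * config T C x t)) =
        P * ∑ t ∈ Finset.Icc 1 T, deriv f (Lexo t + P * config T C x t) *
          (config T C yt t - config T C x t) := by
      rw [Finset.mul_sum]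
      exact Finset.sum_congr rfl fun t _ => by ring
    rw [h2] at hs
    have := mul_nonneg hP.le hvi
    unfold totalCost
    linarith
  exact ⟨hmin, fun yt hy hopt => le_antisymm (hmin yt hy) (hopt xtNE hNEfeas)⟩

end Stmt15
end
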